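/- Let µ, γ ≥ 0 with 1 + µγ(1 − α) > 0, α, p, and points be as follows: α > 0, p ≥ 0, α + p ≤ 1, x̄_{t−1}, x_{t−1}, x̃ ∈ E, and x̲ := [(1 + µγ)(1 − α − p)·x̄_{t−1} + α·x_{t−1} + (1 + µγ)·p·x̃]/(1 + µγ(1 − α)), x⁺ := (x_{t−1} + µγ·x̲)/(1 + µγ). Suppose f is differentiable with L-Lipschitz gradient on E and satisfies f(y) ≥ f(x) + ⟪∇f(x), y − x⟫ + µ·V(x, y) for all x, y ∈ X, where µγ, α, γ satisfy γ > 0 and 1 + µγ − Lαγ > 0. Let G ∈ E with δ := G − ∇f(x̲), let x_t ∈ X minimize x ↦ γ·[⟪G, x⟫ + h(x) + µ·V(x̲, x)] + V(x_{t−1}, x) over X, and set x̄_t := (1 − α − p)·x̄_{t−1} + α·x_t + p·x̃. Then for every x ∈ X: f(x̄_t) ≤ (1 − α − p)·f(x̄_{t−1}) + α·[ψ(x) − h(x_t) + (1/γ)·V(x_{t−1}, x) − ((1 + µγ)/γ)·V(x_t, x)] + p·l_f(x̲, x̃) + (αγ·‖δ‖²)/(2·(1 + µγ − Lαγ)) −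 α·⟪δ, x⁺ − x⟫. -/

import Mathlib

/-!
Put `d = xt - xplus`. The definition of `xu` is arranged so that `xbt - xu = α • d`, hence the descent
lemma for an `L`-Lipschitz gradient (`descent`) bounds `f xbt` by the linearization of `f` at `xu`, evaluated
at the convex combination defining `xbt`, plus `L α² ‖d‖² / 2`. The first-order optimality condition of the
prox step (`three_point`), with the strong convexity of `f`, bounds the linearization at `xt` by `ψ x - h xt` and Bregman terms, among
them `-(μ V(xu, xt) + V(xtm, xt) / γ)`. Strong convexity of `w` and convexity of `‖·‖²`
(`norm_sq_weighted_average`) turn the latter into `-(1 + μ γ) ‖d‖² / (2 γ)`, which absorbs `L α ‖d‖² / 2` and,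
through Young's inequality (`neg_inner_le_young`), the error term `-⟪δ, d⟫`.
-/

open RealInnerProductSpace

/-- Chain rule along a line. -/
theorem hasDerivAt_line {E : Type*} [NormedAddCommGroup E] [InnerProductSpace ℝ E] [CompleteSpace E]
    {g : E → ℝ} {g' : E → E} (hg : ∀ x, HasGradientAt g (g' x) x) (a v : E) (t : ℝ) :
    HasDerivAt (fun s : ℝ => g (a + s • v)) ⟪g' (a + t • v), v⟫ t := by
  have h1 : HasDerivAt (fun s : ℝ => a + s • v) v t := by
    simpa using ((hasDerivAt_id t).smul_const v).const_add a
  have h2 := (hg (a + t • v)).hasFDerivAt.comp_hasDerivAt t h1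
  rw [InnerProductSpace.toDual_apply_apply] at h2
  exact h2

/-- Descent lemma: a function with `L`-Lipschitz gradient lies below its quadratic model. -/
theorem descent {E : Type*} [NormedAddCommGroup E] [InnerProductSpace ℝ E] [CompleteSpace E]
    {f : E → ℝ} {f' : E → E} {L : ℝ} (hdiff : ∀ x, HasGradientAt f (f' x) x)
    (hlip : ∀ x y, ‖f' x - f' y‖ ≤ L * ‖x - y‖) (a b : E) :
    f b ≤ f a + ⟪f' a, b - a⟫ + L / 2 * ‖b - a‖ ^ 2 := by
  set v := b - a with hv
  -- The gap to the quadratic model along the segment from `a` to `b` has nonpositive derivative.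
  let g : ℝ → ℝ := fun s => f (a + s • v) - s * ⟪f' a, v⟫ - L / 2 * ‖v‖ ^ 2 * s ^ 2
  have hg : ∀ t, HasDerivAt g (⟪f' (a + t • v), v⟫ - ⟪f' a, v⟫ - L / 2 * ‖v‖ ^ 2 * (2 * t)) t := by
    intro t
    have h1 := ((hasDerivAt_line hdiff a v t).sub ((hasDerivAt_id t).mul_const ⟪f' a, v⟫)).sub
      (((hasDerivAt_id t).pow 2).const_mul (L / 2 * ‖v‖ ^ 2))
    refine HasDerivAt.congr_deriv h1 ?_
    simp only [id, one_mul, mul_one, pow_one, Nat.cast_ofNat, Nat.add_one_sub_one]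
  have hanti : AntitoneOn g (Set.Icc 0 1) := by
    refine antitoneOn_of_deriv_nonpos (convex_Icc 0 1)
      (fun t _ => (hg t).continuousAt.continuousWithinAt)
      (fun t _ => (hg t).differentiableAt.differentiableWithinAt) ?_
    intro t ht
    rw [interior_Icc] at ht
    rw [(hg t).deriv, ← inner_sub_left]
    have h1 : ⟪f' (a + t • v) - f' a, v⟫ ≤ ‖f' (a + t • v) - f' a‖ * ‖v‖ := real_inner_le_norm _ _
    have h2 := hlip (a + t • v) a
    rw [add_sub_cancel_left, norm_smul, Real.norm_of_nonneg ht.1.le] at h2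
    nlinarith [mul_le_mul_of_nonneg_right h2 (norm_nonneg v)]
  have h01 := hanti (Set.left_mem_Icc.2 zero_le_one) (Set.right_mem_Icc.2 zero_le_one) zero_le_one
  simp only [g, zero_smul, one_smul, add_zero] at h01
  rw [hv, add_sub_cancel] at h01
  linarith

theorem nonneg_of_le_add_mul {u : ℝ → ℝ} {d c : ℝ} (hu : HasDerivAt u d 0)
    (hle : ∀ s, 0 < s → s ≤ 1 → u 0 ≤ u s + s * c) : 0 ≤ d + c := by
  have ht := (hasDerivAt_iff_tendsto_slope_zero.1 hu).mono_left (nhdsGT_le_nhdsNE 0)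
  have key : -c ≤ d := by
    refine ge_of_tendsto ht ?_
    filter_upwards [Ioc_mem_nhdsGT (zero_lt_one' ℝ)] with s hs
    rw [zero_add, smul_eq_mul, inv_mul_eq_div, le_div_iff₀ hs.1]
    linarith [hle s hs.1 hs.2]
  linarith

/-- Optimality of the prox step in three-point form: since the objective is `h` plus a smooth part,
and the Bregman part has total weight `1 + μ γ`, the minimal value plus `(1 + μ γ) V(xt, x)` stays below
the value at `x`. Only directional derivatives at `xt` are needed, so `h` may be nonsmooth. -/
theorem three_point {E : Type*} [NormedAddCommGroup E] [InnerProductSpace ℝ E] [CompleteSpace E]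
    {X : Set E} (hX : Convex ℝ X) {h : E → ℝ} (hh : ConvexOn ℝ Set.univ h)
    {w : E → ℝ} {w' : E → E} (hw : ∀ x, HasGradientAt w (w' x) x)
    {V : E → E → ℝ} (hV : ∀ a b, V a b = w b - w a - ⟪w' a, b - a⟫)
    {μ γ : ℝ} (hγ : 0 < γ) {G xu xtm xt : E} (hxt : xt ∈ X)
    (hmin : ∀ x ∈ X,
      γ * (⟪G, xt⟫ + h xt + μ * V xu xt) + V xtm xt
        ≤ γ * (⟪G, x⟫ + h x + μ * V xu x) + V xtm x)
    {x : E} (hx : x ∈ X) :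
    γ * (⟪G, xt⟫ + h xt + μ * V xu xt) + V xtm xt + (1 + μ * γ) * V xt x
      ≤ γ * (⟪G, x⟫ + h x + μ * V xu x) + V xtm x := by
  -- `c` is the gradient of the affine part of the objective, once the Bregman terms are expanded.
  let c : E := γ • G - (γ * μ) • w' xu - w' xtm
  let v : E := x - xt
  let u : ℝ → ℝ := fun s => s * ⟪c, v⟫ + (1 + μ * γ) * w (xt + s • v)
  have hu : HasDerivAt u (⟪c, v⟫ + (1 + μ * γ) * ⟪w' xt, v⟫) 0 := by
    have h1 := ((hasDerivAt_id (0 : ℝ)).mul_const ⟪c, v⟫).add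
      ((hasDerivAt_line hw xt v 0).const_mul (1 + μ * γ))
    refine HasDerivAt.congr_deriv h1 ?_
    rw [zero_smul, add_zero, one_mul]
  have hopt : 0 ≤ ⟪c, v⟫ + (1 + μ * γ) * ⟪w' xt, v⟫ + γ * (h x - h xt) := by
    refine nonneg_of_le_add_mul hu fun s hs0 hs1 => ?_
    have hy : xt + s • v ∈ X := hX.add_smul_sub_mem hxt hx ⟨hs0.le, hs1⟩
    have hm := hmin _ hy
    have hc : h (xt + s • v) ≤ (1 - s) * h xt + s * h x := by
      have h1 := hh.2 (Set.mem_univ xt) (Set.mem_univ x) (sub_nonneg.2 hs1) hs0.le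
        (sub_add_cancel 1 s)
      have h2 : (1 - s) • xt + s • x = xt + s • v := by simp only [v]; module
      rwa [h2] at h1
    have hc' := mul_le_mul_of_nonneg_left hc hγ.le
    simp only [hV, add_sub_right_comm xt (s • v), inner_add_right, inner_smul_right] at hm
    simp only [u, c, inner_sub_left, inner_smul_left, zero_smul, add_zero]
    simp only [conj_trivial]
    linarith
  have e1 : x - xu = (xt - xu) + v := by simp only [v]; abel
  have e2 : x - xtm = (xt - xtm) + v := by simp only [v]; abel
  have e3 : ⟪G, x⟫ = ⟪G, xt⟫ + ⟪G, v⟫ := by rw [← inner_add_right]; simp [v]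
  simp only [c, inner_sub_left, inner_smul_left, conj_trivial] at hopt
  rw [e3, hV xu x, hV xtm x, hV xu xt, hV xtm xt, hV xt x, e1, e2, inner_add_right, inner_add_right]
  change _ + (1 + μ * γ) * (w x - w xt - ⟪w' xt, v⟫) ≤ _
  linarith

/-- Convexity of `‖·‖²` at the weighted average `(a + k b) / (1 + k)`. -/
theorem norm_sq_weighted_average {E : Type*} [NormedAddCommGroup E] [InnerProductSpace ℝ E]
    {k : ℝ} (hk : 0 ≤ k) (a b z : E) :
    (1 + k) * ‖z - (1 + k)⁻¹ • (a + k • b)‖ ^ 2 ≤ ‖z - a‖ ^ 2 + k * ‖z - b‖ ^ 2 := by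
  have hk1 : 0 < 1 + k := by linarith
  have e : z - (1 + k)⁻¹ • (a + k • b) = (1 + k)⁻¹ • ((z - a) + k • (z - b)) := by
    match_scalars <;> field_simp
  rw [e, norm_smul, mul_pow, Real.norm_of_nonneg (inv_nonneg.2 hk1.le), norm_add_sq_real,
    norm_smul, Real.norm_of_nonneg hk, inner_smul_right]
  have h1 := norm_sub_sq_real (z - a) (z - b)
  have h2 := mul_nonneg hk (sq_nonneg ‖(z - a) - (z - b)‖)
  have e2 : (1 + k) * ((1 + k)⁻¹ ^ 2 * (‖z - a‖ ^ 2 + 2 * (k * ⟪z - a, z - b⟫) + (k * ‖z - b‖) ^ 2))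
      = (‖z - a‖ ^ 2 + 2 * (k * ⟪z - a, z - b⟫) + (k * ‖z - b‖) ^ 2) / (1 + k) := by
    field_simp
  rw [e2, div_le_iff₀ hk1]
  rw [h1] at h2
  linarith

theorem neg_inner_le_young {E : Type*} [NormedAddCommGroup E] [InnerProductSpace ℝ E]
    {c γ : ℝ} (hc : 0 < c) (hγ : 0 < γ) (δ d : E) :
    -⟪δ, d⟫ - c / (2 * γ) * ‖d‖ ^ 2 ≤ γ * ‖δ‖ ^ 2 / (2 * c) := by
  have h1 : 0 ≤ ‖γ • δ + c • d‖ ^ 2 := sq_nonneg _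
  rw [norm_add_sq_real, norm_smul, norm_smul, Real.norm_of_nonneg hγ.le, Real.norm_of_nonneg hc.le,
    inner_smul_left, inner_smul_right, conj_trivial] at h1
  have h2 : γ * ‖δ‖ ^ 2 / (2 * c) - (-⟪δ, d⟫ - c / (2 * γ) * ‖d‖ ^ 2)
      = ((γ * ‖δ‖) ^ 2 + 2 * (γ * (c * ⟪δ, d⟫)) + (c * ‖d‖) ^ 2) / (2 * c * γ) := by
    field_simp
    ring
  have h3 := div_nonneg h1 (by positivity : 0 ≤ 2 * c * γ)
  linarith

theorem mem_of_sum_three {E : Type*} [AddCommGroup E] [Module ℝ E] {X : Set E}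
    (hX : Convex ℝ X) {x y z : E} (hx : x ∈ X) (hy : y ∈ X) (hz : z ∈ X) {a b c : ℝ}
    (ha : 0 ≤ a) (hb : 0 ≤ b) (hc : 0 ≤ c) (h : a + b + c = 1) : a • x + b • y + c • z ∈ X := by
  have := hX.sum_mem (t := Finset.univ) (w := ![a, b, c]) (z := ![x, y, z])
    (by intro i _; fin_cases i <;> simpa) (by simpa [Fin.sum_univ_three] using h)
    (by intro i _; fin_cases i <;> simpa)
  simpa [Fin.sum_univ_three] using this

/-- Inequality \eqref{rel1} in the proof of Lemma `Lemma_VARSGD_iter`. -/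
theorem stmt9 {E : Type*} [NormedAddCommGroup E] [InnerProductSpace ℝ E] [CompleteSpace E]
    (X : Set E) (hX : Convex ℝ X)
    (f : E → ℝ) (f' : E → E) (L : ℝ)
    (hdiff : ∀ x, HasGradientAt f (f' x) x)
    (hlip : ∀ x y, ‖f' x - f' y‖ ≤ L * ‖x - y‖)
    (h : E → ℝ) (hh : ConvexOn ℝ Set.univ h)
    (ψ : E → ℝ) (hψ : ∀ x, ψ x = f x + h x)
    (w : E → ℝ) (w' : E → E)
    (hwconv : ConvexOn ℝ Set.univ w)
    (hw : ∀ x, HasGradientAt w (w' x) x)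
    (V : E → E → ℝ) (hV : ∀ a b, V a b = w b - w a - ⟪w' a, b - a⟫)
    (hVsc : ∀ a b, V a b ≥ 1 / 2 * ‖b - a‖ ^ 2)
    (μ γ α p : ℝ) (hμ : 0 ≤ μ) (hγ : 0 < γ)
    (hαpos : 0 < α) (hp : 0 ≤ p) (hαp : α + p ≤ 1)
    (hpos1 : 0 < 1 + μ * γ * (1 - α))
    (hpos2 : 0 < 1 + μ * γ - L * α * γ)
    (hsc : ∀ x ∈ X, ∀ y ∈ X, f y ≥ f x + ⟪f' x, y - x⟫ + μ * V x y)
    (xbtm xtm xtil : E) (hxbtm : xbtm ∈ X) (hxtm : xtm ∈ X) (hxtil : xtil ∈ X)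
    (xu : E) (hxu : xu = (1 + μ * γ * (1 - α))⁻¹ •
      ((1 + μ * γ) • ((1 - α - p) • xbtm) + α • xtm + ((1 + μ * γ) * p) • xtil))
    (xplus : E) (hxplus : xplus = (1 + μ * γ)⁻¹ • (xtm + (μ * γ) • xu))
    (G δ : E) (hδ : δ = G - f' xu)
    (xt : E) (hxt : xt ∈ X)
    (hmin : ∀ x ∈ X,
      γ * (⟪G, xt⟫ + h xt + μ * V xu xt) + V xtm xt
        ≤ γ * (⟪G, x⟫ + h x + μ * V xu x) + V xtm x)
    (xbt : E) (hxbt : xbt = (1 - α - p) • xbtm + α • xt + p • xtil) :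
    ∀ x ∈ X,
      f xbt ≤ (1 - α - p) * f xbtm
        + α * (ψ x - h xt + (1 / γ) * V xtm x - (1 + μ * γ) / γ * V xt x)
        + p * (f xu + ⟪f' xu, xtil - xu⟫)
        + α * γ * ‖δ‖ ^ 2 / (2 * (1 + μ * γ - L * α * γ))
        - α * ⟪δ, xplus - x⟫ := by
  intro x hx
  have hμγ : 0 ≤ μ * γ := mul_nonneg hμ hγ.le
  have hk : 0 < 1 + μ * γ := by linarith
  have hq : 0 ≤ 1 - α - p := by linarith
  have hV0 : ∀ a b, 0 ≤ V a b := fun a b => le_trans (by positivity) (hVsc a b)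
  have hxuX : xu ∈ X := by
    have e : xu = ((1 + μ * γ * (1 - α))⁻¹ * ((1 + μ * γ) * (1 - α - p))) • xbtm
        + ((1 + μ * γ * (1 - α))⁻¹ * α) • xtm
        + ((1 + μ * γ * (1 - α))⁻¹ * ((1 + μ * γ) * p)) • xtil := by
      rw [hxu]; module
    have hi := inv_nonneg.2 hpos1.le
    rw [e]
    refine mem_of_sum_three hX hxbtm hxtm hxtil ?_ ?_ ?_ ?_
    · exact mul_nonneg hi (mul_nonneg hk.le hq)
    · exact mul_nonneg hi hαpos.le
    · exact mul_nonneg hi (mul_nonneg hk.le hp)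
    · rw [← mul_add, ← mul_add]
      rw [inv_mul_eq_one₀ hpos1.ne']
      ring
  set d := xt - xplus with hd
  have hstep : xbt - xu = α • d := by
    have e : (1 + μ * γ * (1 - α)) • xu
        = (1 + μ * γ) • ((1 - α - p) • xbtm) + α • xtm + ((1 + μ * γ) * p) • xtil := by
      rw [hxu, smul_inv_smul₀ hpos1.ne']
    have e' : (1 + μ * γ) • xplus = xtm + (μ * γ) • xu := by
      rw [hxplus, smul_inv_smul₀ hk.ne']
    have e'' : (1 + μ * γ) • (xbt - xu) = (1 + μ * γ) • (α • d) := by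
      rw [hd, hxbt]
      linear_combination (norm := module) α • e' - e
    exact smul_right_injective E hk.ne' e''
  have hdesc := descent hdiff hlip xu xbt
  have hlin : ⟪f' xu, xbt - xu⟫ = (1 - α - p) * ⟪f' xu, xbtm - xu⟫ + α * ⟪f' xu, xt - xu⟫
      + p * ⟪f' xu, xtil - xu⟫ := by
    simp only [← real_inner_smul_right, ← inner_add_right]
    congr 1
    rw [hxbt]; module
  have hnorm : ‖xbt - xu‖ ^ 2 = α ^ 2 * ‖d‖ ^ 2 := by
    rw [hstep, norm_smul, mul_pow, Real.norm_of_nonneg hαpos.le]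
  have hbtm : f xu + ⟪f' xu, xbtm - xu⟫ ≤ f xbtm := by
    linarith [hsc xu hxuX xbtm hxbtm, mul_nonneg hμ (hV0 xu xbtm)]
  have htp := three_point hX hh hw hV hγ hxt hmin hx
  have havg := norm_sq_weighted_average hμγ xtm xu xt
  rw [← hxplus, ← hd] at havg
  have hbreg : (1 + μ * γ) / 2 * ‖d‖ ^ 2 ≤ γ * (μ * V xu xt) + V xtm xt := by
    have h1 := mul_le_mul_of_nonneg_left (hVsc xu xt) hμγ
    linarith [hVsc xtm xt]
  have hyoung := neg_inner_le_young hpos2 hγ δ d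
  have hlinxt : f xu + ⟪f' xu, xt - xu⟫ ≤ ψ x - h xt + (1 / γ) * V xtm x
      - (1 + μ * γ) / γ * V xt x - (1 + μ * γ) / (2 * γ) * ‖d‖ ^ 2 - ⟪δ, d⟫ - ⟪δ, xplus - x⟫ := by
    have hs := hsc xu hxuX x hx
    have hG : ⟪f' xu, xt - xu⟫ + ⟪δ, d⟫ + ⟪δ, xplus - x⟫
        = ⟪G, xt⟫ - ⟪G, x⟫ + ⟪f' xu, x - xu⟫ := by
      have e : d + (xplus - x) = xt - x := by rw [hd]; abel
      rw [add_assoc, ← inner_add_right, e, hδ]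
      simp only [inner_sub_left, inner_sub_right]
      ring
    have hdiv : ⟪G, xt⟫ + h xt + (1 + μ * γ) / (2 * γ) * ‖d‖ ^ 2 + (1 + μ * γ) / γ * V xt x
        ≤ ⟪G, x⟫ + h x + μ * V xu x + (1 / γ) * V xtm x := by
      refine le_of_mul_le_mul_left ?_ hγ
      have e1 : γ * (⟪G, xt⟫ + h xt + (1 + μ * γ) / (2 * γ) * ‖d‖ ^ 2 + (1 + μ * γ) / γ * V xt x)
          = γ * (⟪G, xt⟫ + h xt) + (1 + μ * γ) / 2 * ‖d‖ ^ 2 + (1 + μ * γ) * V xt x := by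
        field_simp
      have e2 : γ * (⟪G, x⟫ + h x + μ * V xu x + (1 / γ) * V xtm x)
          = γ * (⟪G, x⟫ + h x + μ * V xu x) + V xtm x := by
        field_simp
      rw [e1, e2]
      linarith
    rw [hψ]
    linarith
  rw [hlin, hnorm] at hdesc
  have h1 := mul_le_mul_of_nonneg_left hbtm hq
  have h2 := mul_le_mul_of_nonneg_left hlinxt hαpos.le
  have h3 := mul_le_mul_of_nonneg_left hyoung hαpos.le
  -- The quadratic terms in `‖d‖` left by the descent lemma and by the prox step combine.
  have e1 : (1 + μ * γ - L * α * γ) / (2 * γ) = (1 + μ * γ) / (2 * γ) - L * α / 2 := by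
    field_simp
  have e2 : α * γ * ‖δ‖ ^ 2 / (2 * (1 + μ * γ - L * α * γ))
      = α * (γ * ‖δ‖ ^ 2 / (2 * (1 + μ * γ - L * α * γ))) := by ring
  rw [e1] at h3
  rw [e2]
  linarith
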